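/- arXiv:1006.3501 — 2 statements merged into one kernel-verified Lean document; each statement's English description precedes it below -/
import Mathlib

section
/- Let C be a non-degenerate pivotal k-category (k a commutative ring). Then for every tuple S of signed objects of C, the evaluation form ω_S : Hom(𝟙, X_{S*}) ⊗ Hom(𝟙, X_S) → k is non-degenerate. -/
open CategoryTheory CategoryTheory.Limits MonoidalCategory

universe v u w

/-- A pivotal category: a monoidal category in which every object is equipped with a dual
object and with evaluation/coevaluation morphisms forming a left duality and a right
duality, such that left and right duals of morphisms coincide, the left and right
monoidal constraints coincide, and the left and right evaluations of the unit coincide. -/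
class PivotalCat (C : Type u) [Category.{v} C] [MonoidalCategory C] where
  dual : C → C
  evl : ∀ X : C, dual X ⊗ X ⟶ 𝟙_ C
  coevl : ∀ X : C, 𝟙_ C ⟶ X ⊗ dual X
  evr : ∀ X : C, X ⊗ dual X ⟶ 𝟙_ C
  coevr : ∀ X : C, 𝟙_ C ⟶ dual X ⊗ X
  left_zigzag₁ : ∀ X : C,
    (λ_ X).inv ≫ (coevl X ▷ X) ≫ (α_ X (dual X) X).hom ≫ (X ◁ evl X) ≫ (ρ_ X).hom = 𝟙 X
  left_zigzag₂ : ∀ X : C,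
    (ρ_ (dual X)).inv ≫ (dual X ◁ coevl X) ≫ (α_ (dual X) X (dual X)).inv ≫
      (evl X ▷ dual X) ≫ (λ_ (dual X)).hom = 𝟙 (dual X)
  right_zigzag₁ : ∀ X : C,
    (ρ_ X).inv ≫ (X ◁ coevr X) ≫ (α_ X (dual X) X).inv ≫ (evr X ▷ X) ≫ (λ_ X).hom = 𝟙 X
  right_zigzag₂ : ∀ X : C,
    (λ_ (dual X)).inv ≫ (coevr X ▷ dual X) ≫ (α_ (dual X) X (dual X)).hom ≫
      (dual X ◁ evr X) ≫ (ρ_ (dual X)).hom = 𝟙 (dual X)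
  ldual_eq_rdual : ∀ {X Y : C} (f : X ⟶ Y),
    (ρ_ (dual Y)).inv ≫ (dual Y ◁ coevl X) ≫ (dual Y ◁ (f ▷ dual X)) ≫
      (α_ (dual Y) Y (dual X)).inv ≫ (evl Y ▷ dual X) ≫ (λ_ (dual X)).hom =
    (λ_ (dual Y)).inv ≫ (coevr X ▷ dual Y) ≫ ((dual X ◁ f) ▷ dual Y) ≫
      (α_ (dual X) Y (dual Y)).hom ≫ (dual X ◁ evr Y) ≫ (ρ_ (dual X)).hom
  constraint_eq : ∀ X Y : C,
    (ρ_ (dual X ⊗ dual Y)).inv ≫ ((dual X ⊗ dual Y) ◁ coevl (Y ⊗ X)) ≫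
      (α_ (dual X) (dual Y) ((Y ⊗ X) ⊗ dual (Y ⊗ X))).hom ≫
      (dual X ◁ (α_ (dual Y) (Y ⊗ X) (dual (Y ⊗ X))).inv) ≫
      (dual X ◁ (((α_ (dual Y) Y X).inv ≫ (evl Y ▷ X) ≫ (λ_ X).hom) ▷ dual (Y ⊗ X))) ≫
      (α_ (dual X) X (dual (Y ⊗ X))).inv ≫ (evl X ▷ dual (Y ⊗ X)) ≫ (λ_ (dual (Y ⊗ X))).hom =
    (λ_ (dual X ⊗ dual Y)).inv ≫ (coevr (Y ⊗ X) ▷ (dual X ⊗ dual Y)) ≫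
      (α_ (dual (Y ⊗ X)) (Y ⊗ X) (dual X ⊗ dual Y)).hom ≫
      (dual (Y ⊗ X) ◁ ((α_ Y X (dual X ⊗ dual Y)).hom ≫ (Y ◁ (α_ X (dual X) (dual Y)).inv) ≫
        (Y ◁ (evr X ▷ dual Y)) ≫ (Y ◁ (λ_ (dual Y)).hom) ≫ evr Y)) ≫
      (ρ_ (dual (Y ⊗ X))).hom
  ev_unit : (ρ_ (dual (𝟙_ C))).inv ≫ evl (𝟙_ C) = (λ_ (dual (𝟙_ C))).inv ≫ evr (𝟙_ C)

namespace PivotalCat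

variable {C : Type u} [Category.{v} C] [MonoidalCategory C] [PivotalCat C]

/-- The (common left = right) dual of a morphism. -/
def pdual {X Y : C} (f : X ⟶ Y) : dual Y ⟶ dual X :=
  (ρ_ (dual Y)).inv ≫ (dual Y ◁ coevl X) ≫ (dual Y ◁ (f ▷ dual X)) ≫
    (α_ (dual Y) Y (dual X)).inv ≫ (evl Y ▷ dual X) ≫ (λ_ (dual X)).hom

/-- The (common left = right) pivotal monoidal constraint `X* ⊗ Y* ⟶ (Y ⊗ X)*`. -/
def mcon (X Y : C) : dual X ⊗ dual Y ⟶ dual (Y ⊗ X) :=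
  (ρ_ (dual X ⊗ dual Y)).inv ≫ ((dual X ⊗ dual Y) ◁ coevl (Y ⊗ X)) ≫
    (α_ (dual X) (dual Y) ((Y ⊗ X) ⊗ dual (Y ⊗ X))).hom ≫
    (dual X ◁ (α_ (dual Y) (Y ⊗ X) (dual (Y ⊗ X))).inv) ≫
    (dual X ◁ (((α_ (dual Y) Y X).inv ≫ (evl Y ▷ X) ≫ (λ_ X).hom) ▷ dual (Y ⊗ X))) ≫
    (α_ (dual X) X (dual (Y ⊗ X))).inv ≫ (evl X ▷ dual (Y ⊗ X)) ≫ (λ_ (dual (Y ⊗ X))).hom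

/-- The left trace of an endomorphism. -/
def trl {X : C} (f : X ⟶ X) : 𝟙_ C ⟶ 𝟙_ C := coevr X ≫ (dual X ◁ f) ≫ evl X

/-- The right trace of an endomorphism. -/
def trr {X : C} (f : X ⟶ X) : 𝟙_ C ⟶ 𝟙_ C := coevl X ≫ (f ▷ dual X) ≫ evr X

/-- The left dimension of an object, as an endomorphism of the unit. -/
def diml (X : C) : 𝟙_ C ⟶ 𝟙_ C := trl (𝟙 X)

/-- The right dimension of an object, as an endomorphism of the unit. -/
def dimr (X : C) : 𝟙_ C ⟶ 𝟙_ C := trr (𝟙 X)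

/-- The permutation map `σ_{X,Y} : Hom(𝟙, X ⊗ Y) → Hom(𝟙, Y ⊗ X)`,
`α ↦ (ev_l X ⊗ id_{Y⊗X}) ∘ (id_{X*} ⊗ α ⊗ id_X) ∘ coev_r X`. -/
def sigmaMap (X Y : C) (a : 𝟙_ C ⟶ X ⊗ Y) : 𝟙_ C ⟶ Y ⊗ X :=
  coevr X ≫ (dual X ◁ (λ_ X).inv) ≫ (dual X ◁ (a ▷ X)) ≫ (dual X ◁ (α_ X Y X).hom) ≫
    (α_ (dual X) X (Y ⊗ X)).inv ≫ (evl X ▷ (Y ⊗ X)) ≫ (λ_ (Y ⊗ X)).hom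

end PivotalCat

/-- A pivotal category is spherical when left and right traces coincide. -/
class SphericalCat (C : Type u) [Category.{v} C] [MonoidalCategory C] [PivotalCat C] : Prop where
  tr_eq : ∀ {X : C} (f : X ⟶ X), PivotalCat.trl f = PivotalCat.trr f
/-- An object `X` of a `k`-linear category is simple if `λ ↦ λ • id_X` is a bijection
`k → End X`. -/
def IsSimpleObj (k : Type w) [CommRing k] {C : Type u} [Category.{v} C]
    [Preadditive C] [CategoryTheory.Linear k C] (X : C) : Prop :=
  Function.Bijective fun a : k => a • 𝟙 X

/-- A monoidal `k`-category: the hom-sets are `k`-modules, composition and the monoidal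
product are `k`-bilinear (all this is encoded in the instance parameters), and
`End(𝟙)` is free of rank one via `λ ↦ λ • id`. -/
class MonoidalKCat (k : Type w) [CommRing k] (C : Type u) [Category.{v} C]
    [Preadditive C] [CategoryTheory.Linear k C] [MonoidalCategory C]
    [MonoidalPreadditive C] [CategoryTheory.MonoidalLinear k C] : Prop where
  unit_free : Function.Bijective fun a : k => a • 𝟙 (𝟙_ C)

/-- The identification `End(𝟙) = k` of a monoidal `k`-category. -/
noncomputable def toScalar (k : Type w) [CommRing k] {C : Type u} [Category.{v} C]
    [Preadditive C] [CategoryTheory.Linear k C] [MonoidalCategory C]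
    [MonoidalPreadditive C] [CategoryTheory.MonoidalLinear k C] [MonoidalKCat k C]
    (f : 𝟙_ C ⟶ 𝟙_ C) : k :=
  (Equiv.ofBijective (fun a : k => a • 𝟙 (𝟙_ C))
    (MonoidalKCat.unit_free (k := k) (C := C))).symm f

/-- The left dimension of an object as an element of `k`. -/
noncomputable def sdiml (k : Type w) [CommRing k] {C : Type u} [Category.{v} C]
    [Preadditive C] [CategoryTheory.Linear k C] [MonoidalCategory C]
    [MonoidalPreadditive C] [CategoryTheory.MonoidalLinear k C] [PivotalCat C]
    [MonoidalKCat k C] (X : C) : k :=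
  toScalar k (PivotalCat.diml X)

/-- The right dimension of an object as an element of `k`. -/
noncomputable def sdimr (k : Type w) [CommRing k] {C : Type u} [Category.{v} C]
    [Preadditive C] [CategoryTheory.Linear k C] [MonoidalCategory C]
    [MonoidalPreadditive C] [CategoryTheory.MonoidalLinear k C] [PivotalCat C]
    [MonoidalKCat k C] (X : C) : k :=
  toScalar k (PivotalCat.dimr X)

/-- A pre-fusion category over `k`: a pivotal `k`-category in which every finite family of
objects has a direct sum, every object is a finite direct sum of simple objects, and there
are no nonzero morphisms between non-isomorphic simple objects. -/
class PreFusionCat (k : Type w) [CommRing k] (C : Type u) [Category.{v} C]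
    [Preadditive C] [CategoryTheory.Linear k C] [MonoidalCategory C]
    [MonoidalPreadditive C] [CategoryTheory.MonoidalLinear k C]
    [CategoryTheory.Limits.HasFiniteBiproducts C] [PivotalCat C] [MonoidalKCat k C] : Prop where
  semisimple : ∀ X : C, ∃ (n : ℕ) (obj : Fin n → C) (p : ∀ a, X ⟶ obj a) (q : ∀ a, obj a ⟶ X),
    (∀ a, IsSimpleObj k (obj a)) ∧ (∑ a, p a ≫ q a = 𝟙 X) ∧
    (∀ a, q a ≫ p a = 𝟙 (obj a)) ∧ (∀ a b, a ≠ b → q a ≫ p b = 0)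
  simple_hom_zero : ∀ {i j : C}, IsSimpleObj k i → IsSimpleObj k j →
    IsEmpty (i ≅ j) → ∀ f : i ⟶ j, f = 0

/-- A fusion category over `k`: a pre-fusion category with finitely many isomorphism
classes of simple objects. -/
class FusionCat (k : Type w) [CommRing k] (C : Type u) [Category.{v} C]
    [Preadditive C] [CategoryTheory.Linear k C] [MonoidalCategory C]
    [MonoidalPreadditive C] [CategoryTheory.MonoidalLinear k C]
    [CategoryTheory.Limits.HasFiniteBiproducts C] [PivotalCat C] [MonoidalKCat k C]
    [PreFusionCat k C] : Prop where
  finitely_many_simples : ∃ S : Set C, S.Finite ∧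
    ∀ i : C, IsSimpleObj k i → ∃ j ∈ S, Nonempty (i ≅ j)

/-- A representative set of simple objects: it contains the unit object, consists of simple
objects, and every simple object is isomorphic to exactly one of its elements. -/
def IsRepresentativeSet (k : Type w) [CommRing k] (C : Type u) [Category.{v} C]
    [Preadditive C] [CategoryTheory.Linear k C] [MonoidalCategory C] (I : Set C) : Prop :=
  (𝟙_ C) ∈ I ∧ (∀ i ∈ I, IsSimpleObj k i) ∧
    ∀ X : C, IsSimpleObj k X → ∃! i, i ∈ I ∧ Nonempty (X ≅ i)

/-- The dimension of a fusion category with (finite) representative set `I` of simple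
objects: `dim C = ∑_{i ∈ I} dim_l(i) · dim_r(i)`. -/
noncomputable def catDim (k : Type w) [CommRing k] {C : Type u} [Category.{v} C]
    [Preadditive C] [CategoryTheory.Linear k C] [MonoidalCategory C]
    [MonoidalPreadditive C] [CategoryTheory.MonoidalLinear k C] [PivotalCat C]
    [MonoidalKCat k C] (I : Finset C) : k :=
  ∑ i ∈ I, sdiml k i * sdimr k i

namespace PivotalCat

variable {C : Type u} [Category.{v} C] [MonoidalCategory C] [PivotalCat C]

/-- The object `X^ε` associated with a signed object `(X, ε)`:
`X^+ = X` and `X^- = X*`. -/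
def sobj : C × Bool → C
  | (X, true) => X
  | (X, false) => dual X

/-- The sign-flip `(X, ε) ↦ (X, -ε)` on signed objects. -/
def flipSign : C × Bool → C × Bool
  | (X, b) => (X, !b)

/-- The dual tuple `S* = ((X_n, -ε_n), …, (X_1, -ε_1))` of a tuple
`S = ((X_1, ε_1), …, (X_n, ε_n))` of signed objects. -/
def Sstar (S : List (C × Bool)) : List (C × Bool) := (S.map flipSign).reverse

/-- The object `X_S = X_1^{ε_1} ⊗ ⋯ ⊗ X_n^{ε_n}` of a tuple of signed objects. -/
def XS : List (C × Bool) → C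
  | [] => 𝟙_ C
  | P :: T => sobj P ⊗ XS T

theorem Sstar_cons (P : C × Bool) (T : List (C × Bool)) :
    Sstar (P :: T) = Sstar T ++ [flipSign P] := by
  simp [Sstar]

theorem Sstar_append (S T : List (C × Bool)) :
    Sstar (S ++ T) = Sstar T ++ Sstar S := by
  simp [Sstar]

/-- The identification `X_{AB} = X_A ⊗ X_B` for concatenated tuples. -/
def splitIso : (A B : List (C × Bool)) → (XS (A ++ B) ≅ XS A ⊗ XS B)
  | [], B => (λ_ (XS B)).symm
  | P :: A, B => whiskerLeftIso (sobj P) (splitIso A B) ≪≫ (α_ (sobj P) (XS A) (XS B)).symm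

/-- The elementary evaluation `Ev_{(X,+)} = ev_l X`, `Ev_{(X,-)} = ev_r X`. -/
def ev1 : (P : C × Bool) → (sobj (flipSign P) ⊗ sobj P ⟶ 𝟙_ C)
  | (X, true) => evl X
  | (X, false) => evr X

/-- The evaluation morphism `Ev_S : X_{S*} ⊗ X_S ⟶ 𝟙`, defined recursively by
`Ev_{(X,+)} = ev_l X`, `Ev_{(X,-)} = ev_r X`, and
`Ev_{ST} = Ev_T ∘ (id_{X_{T*}} ⊗ Ev_S ⊗ id_{X_T})`. -/
def EvS : (S : List (C × Bool)) → (XS (Sstar S) ⊗ XS S ⟶ 𝟙_ C)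
  | [] => (λ_ (𝟙_ C)).hom
  | P :: T =>
    ((eqToHom (congrArg XS (Sstar_cons P T)) ≫ (splitIso (Sstar T) [flipSign P]).hom ≫
        (XS (Sstar T) ◁ (ρ_ (sobj (flipSign P))).hom)) ▷ (sobj P ⊗ XS T)) ≫
      (α_ (XS (Sstar T)) (sobj (flipSign P)) (sobj P ⊗ XS T)).hom ≫
      (XS (Sstar T) ◁ (α_ (sobj (flipSign P)) (sobj P) (XS T)).inv) ≫
      (XS (Sstar T) ◁ (ev1 P ▷ XS T)) ≫
      (XS (Sstar T) ◁ (λ_ (XS T)).hom) ≫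
      EvS T

/-- The evaluation form `ω_S(α ⊗ β) = Ev_S ∘ (α ⊗ β) ∈ End(𝟙)`. -/
def omegaS (S : List (C × Bool)) (a : 𝟙_ C ⟶ XS (Sstar S)) (b : 𝟙_ C ⟶ XS S) :
    𝟙_ C ⟶ 𝟙_ C :=
  (λ_ (𝟙_ C)).inv ≫ (a ⊗ₘ b) ≫ EvS S

end PivotalCat

/-- A pairing `ω : M × N → k` of `k`-modules is non-degenerate if it admits an inverse
copairing: finite families `(a_i)` in `N` and `(b_i)` in `M` (representing an element
`Ω(1) = ∑ a_i ⊗ b_i` of `N ⊗ M`) such that `(id_N ⊗ ω)(Ω ⊗ id_N) = id_N` and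
`(ω ⊗ id_M)(id_M ⊗ Ω) = id_M`. -/
def IsNondegeneratePairing (k : Type w) [CommRing k] {M N : Type*}
    [AddCommMonoid M] [Module k M] [AddCommMonoid N] [Module k N]
    (ω : M → N → k) : Prop :=
  ∃ (n : ℕ) (a : Fin n → N) (b : Fin n → M),
    (∀ y : N, ∑ i, ω (b i) y • a i = y) ∧ (∀ x : M, ∑ i, ω x (a i) • b i = x)

/-- The evaluation pairing `ω_X : Hom(𝟙, X*) × Hom(𝟙, X) → k`,
`(α, β) ↦ ev_l X ∘ (α ⊗ β)`. -/
noncomputable def omegaX (k : Type w) [CommRing k] {C : Type u} [Category.{v} C]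
    [Preadditive C] [CategoryTheory.Linear k C] [MonoidalCategory C]
    [MonoidalPreadditive C] [CategoryTheory.MonoidalLinear k C] [PivotalCat C]
    [MonoidalKCat k C] (X : C) :
    (𝟙_ C ⟶ PivotalCat.dual X) → (𝟙_ C ⟶ X) → k :=
  fun a b => toScalar k ((λ_ (𝟙_ C)).inv ≫ (a ⊗ₘ b) ≫ PivotalCat.evl X)

/-- A pivotal `k`-category is non-degenerate if for every object `X` the pairing
`ω_X : Hom(𝟙, X*) × Hom(𝟙, X) → k` is non-degenerate. -/
def NondegeneratePivotal (k : Type w) [CommRing k] (C : Type u) [Category.{v} C]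
    [Preadditive C] [CategoryTheory.Linear k C] [MonoidalCategory C]
    [MonoidalPreadditive C] [CategoryTheory.MonoidalLinear k C] [PivotalCat C]
    [MonoidalKCat k C] : Prop :=
  ∀ X : C, IsNondegeneratePairing k (omegaX k X)

/-!
An evaluation `Y ⊗ X ⟶ 𝟙` belonging to an exact pairing determines `Y` up to a unique
isomorphism compatible with evaluations. Exact pairings are closed under tensor products, so
`Ev_S` is the evaluation of an exact pairing exhibiting `X_{S*}` as a dual of `X_S`. Comparing it
with `ev_l(X_S)` gives an isomorphism `X_{S*} ≅ (X_S)*` carrying `ω_S` to the form `ω_X` of the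
single object `X = X_S`.
-/

section Pairing

variable {k : Type w} [CommRing k] {M M' N : Type*} [AddCommMonoid M] [Module k M]
  [AddCommMonoid M'] [Module k M'] [AddCommMonoid N] [Module k N]

theorem IsNondegeneratePairing.comp_linearEquiv {ω : M' → N → k}
    (hω : IsNondegeneratePairing k ω) (φ : M ≃ₗ[k] M') :
    IsNondegeneratePairing k (fun x y => ω (φ x) y) := by
  obtain ⟨n, a, b, sum_left, sum_right⟩ := hω
  refine ⟨n, a, fun i => φ.symm (b i), fun y => ?_, fun x => ?_⟩
  · simpa only [φ.apply_symm_apply] using sum_left y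
  · simpa only [map_sum, map_smul, φ.symm_apply_apply] using congrArg φ.symm (sum_right (φ x))

theorem isNondegeneratePairing_comp_linearEquiv_iff {ω : M' → N → k} (φ : M ≃ₗ[k] M') :
    IsNondegeneratePairing k (fun x y => ω (φ x) y) ↔ IsNondegeneratePairing k ω := by
  refine ⟨fun h => ?_, fun h => h.comp_linearEquiv φ⟩
  simpa only [φ.apply_symm_apply] using h.comp_linearEquiv φ.symm

end Pairing

section RightDual

variable {C : Type u} [Category.{v} C] [MonoidalCategory C]

theorem rightDualIso_hom_whiskerRight_comp_evaluation {X Y₁ Y₂ : C} (p₁ : ExactPairing X Y₁)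
    (p₂ : ExactPairing X Y₂) :
    (rightDualIso p₁ p₂).hom ▷ X ≫ ε_ X Y₂ = ε_ X Y₁ := by
  have h := @rightAdjointMate_comp_evaluation C _ _ X X ⟨Y₂⟩ ⟨Y₁⟩ (𝟙 X)
  rwa [whiskerLeft_id, Category.id_comp] at h

end RightDual

section UnitPairing

variable (k : Type w) [CommRing k] {C : Type u} [Category.{v} C] [Preadditive C]
  [CategoryTheory.Linear k C] [MonoidalCategory C] [MonoidalPreadditive C]
  [CategoryTheory.MonoidalLinear k C] [MonoidalKCat k C]

/-- The form `Hom(𝟙, Y) × Hom(𝟙, X) → k`, `(α, β) ↦ e ∘ (α ⊗ β)`, induced by a morphism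
`e : Y ⊗ X ⟶ 𝟙`. Both `ω_X` and `ω_S` are instances, for `e = ev_l X` and `e = Ev_S`. -/
noncomputable def unitPairing {X Y : C} (e : Y ⊗ X ⟶ 𝟙_ C) (a : 𝟙_ C ⟶ Y) (b : 𝟙_ C ⟶ X) : k :=
  toScalar k ((λ_ (𝟙_ C)).inv ≫ (a ⊗ₘ b) ≫ e)

theorem unitPairing_whiskerRight_comp {X Y Y' : C} (f : Y ⟶ Y') (e : Y' ⊗ X ⟶ 𝟙_ C)
    (a : 𝟙_ C ⟶ Y) (b : 𝟙_ C ⟶ X) :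
    unitPairing k (f ▷ X ≫ e) a b = unitPairing k e (a ≫ f) b := by
  simp only [unitPairing, tensorHom_def', comp_whiskerRight, Category.assoc]

theorem isNondegeneratePairing_unitPairing_whiskerRight_comp_iff {X Y Y' : C} (φ : Y ≅ Y')
    (e : Y' ⊗ X ⟶ 𝟙_ C) :
    IsNondegeneratePairing k (unitPairing k (φ.hom ▷ X ≫ e)) ↔
      IsNondegeneratePairing k (unitPairing k e) := by
  rw [← isNondegeneratePairing_comp_linearEquiv_iff (Linear.homCongr k (Iso.refl (𝟙_ C)) φ)]
  simp only [Linear.homCongr_apply, Iso.refl_inv, Category.id_comp,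
    ← unitPairing_whiskerRight_comp]

theorem isNondegeneratePairing_unitPairing_evaluation_iff {X Y₁ Y₂ : C} (p₁ : ExactPairing X Y₁)
    (p₂ : ExactPairing X Y₂) :
    IsNondegeneratePairing k (unitPairing k (ε_ X Y₁)) ↔
      IsNondegeneratePairing k (unitPairing k (ε_ X Y₂)) := by
  rw [← rightDualIso_hom_whiskerRight_comp_evaluation p₁ p₂,
    isNondegeneratePairing_unitPairing_whiskerRight_comp_iff]

end UnitPairing

namespace PivotalCat

variable {C : Type u} [Category.{v} C] [MonoidalCategory C] [PivotalCat C]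

/-- The left duality `(ev_l X, coev_l X)`, exhibiting `X*` as the second member of an exact
pairing with `X`. -/
instance exactPairingDual (X : C) : ExactPairing X (dual X) where
  coevaluation' := coevl X
  evaluation' := evl X
  coevaluation_evaluation' := by
    rw [← cancel_epi (ρ_ (dual X)).inv, ← cancel_mono (λ_ (dual X)).hom]
    simpa using left_zigzag₂ X
  evaluation_coevaluation' := by
    rw [← cancel_epi (λ_ X).inv, ← cancel_mono (ρ_ X).hom]
    simpa using left_zigzag₁ X

/-- The right duality `(ev_r X, coev_r X)`, exhibiting `X` as the second member of an exact
pairing with `X*`. -/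
instance exactPairingDualSelf (X : C) : ExactPairing (dual X) X where
  coevaluation' := coevr X
  evaluation' := evr X
  coevaluation_evaluation' := by
    rw [← cancel_epi (ρ_ X).inv, ← cancel_mono (λ_ X).hom]
    simpa using right_zigzag₁ X
  evaluation_coevaluation' := by
    rw [← cancel_epi (λ_ (dual X)).inv, ← cancel_mono (ρ_ (dual X)).hom]
    simpa using right_zigzag₂ X

/-- The exact pairing of `X^ε` with `X^{-ε}` whose evaluation is `Ev_{(X,ε)}`. -/
instance exactPairingSobj : (P : C × Bool) → ExactPairing (sobj P) (sobj (flipSign P))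
  | (X, true) => exactPairingDual X
  | (X, false) => exactPairingDualSelf X

theorem evaluation_sobj (P : C × Bool) : ε_ (sobj P) (sobj (flipSign P)) = ev1 P := by
  obtain ⟨X, _ | _⟩ := P <;> rfl

/-- The identification `X_{(PT)*} = X_{T*} ⊗ X_{P*}` through which `EvS` recurses. -/
def XSSstarConsIso (P : C × Bool) (T : List (C × Bool)) :
    XS (Sstar (P :: T)) ≅ XS (Sstar T) ⊗ sobj (flipSign P) :=
  eqToIso (congrArg XS (Sstar_cons P T)) ≪≫ splitIso (Sstar T) [flipSign P] ≪≫
    whiskerLeftIso (XS (Sstar T)) (ρ_ (sobj (flipSign P)))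

theorem EvS_cons (P : C × Bool) (T : List (C × Bool)) :
    EvS (P :: T) = (XSSstarConsIso P T).hom ▷ (sobj P ⊗ XS T) ≫
      (𝟙 _ ⊗≫ XS (Sstar T) ◁ (ev1 P ▷ XS T) ⊗≫ EvS T) := by
  refine congrArg ((XSSstarConsIso P T).hom ▷ (sobj P ⊗ XS T) ≫ ·) ?_
  monoidal

/-- The exact pairing of `X_S` with `X_{S*}` whose evaluation is `Ev_S`. -/
instance exactPairingXS : (S : List (C × Bool)) → ExactPairing (XS S) (XS (Sstar S))
  | [] => exactPairingUnit
  | P :: T =>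
    letI := exactPairingXS T
    exactPairingCongrRight (X := sobj P ⊗ XS T) (XSSstarConsIso P T)

theorem evaluation_XS (S : List (C × Bool)) : ε_ (XS S) (XS (Sstar S)) = EvS S := by
  induction S with
  | nil => exact unitors_equal.symm
  | cons P T ih =>
    rw [EvS_cons, ← evaluation_sobj, ← ih]
    rfl

end PivotalCat

open PivotalCat in
theorem nondegenerate_omegaS_general (k : Type w) [CommRing k] {C : Type u} [Category.{v} C]
    [Preadditive C] [CategoryTheory.Linear k C] [MonoidalCategory C]
    [MonoidalPreadditive C] [CategoryTheory.MonoidalLinear k C] [PivotalCat C]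
    [MonoidalKCat k C] (S : List (C × Bool)) :
    IsNondegeneratePairing k
        (fun (a : 𝟙_ C ⟶ XS (Sstar S)) (b : 𝟙_ C ⟶ XS S) => toScalar k (omegaS S a b)) ↔
      IsNondegeneratePairing k (omegaX k (XS S)) := by
  have h := isNondegeneratePairing_unitPairing_evaluation_iff k (exactPairingXS S)
    (exactPairingDual (XS S))
  rwa [evaluation_XS] at h

open PivotalCat in
/-- Lemma 2.3: in a non-degenerate pivotal `k`-category, the evaluation form
`ω_S : Hom(𝟙, X_{S*}) × Hom(𝟙, X_S) → k` is non-degenerate for every tuple `S` of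
signed objects. -/
theorem nondegenerate_omegaS (k : Type w) [CommRing k] (C : Type u) [Category.{v} C]
    [Preadditive C] [CategoryTheory.Linear k C] [MonoidalCategory C]
    [MonoidalPreadditive C] [CategoryTheory.MonoidalLinear k C] [PivotalCat C]
    [MonoidalKCat k C] (hnd : NondegeneratePivotal k C) (S : List (C × Bool)) :
    IsNondegeneratePairing k
      (fun (a : 𝟙_ C ⟶ XS (Sstar S)) (b : 𝟙_ C ⟶ XS S) => toScalar k (omegaS S a b)) := by
  exact (nondegenerate_omegaS_general k S).2 (hnd (XS S))
end

section
/- Let C be a pivotal category. For all objects X, Y of C and every α ∈ Hom(𝟙, X⊗Y): σ_{X,Y}(α) = (id_{Y⊗X} ⊗ ev_r(Y))(id_Y ⊗ α ⊗ id_{Y*})coev_l(Y). -/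
open CategoryTheory CategoryTheory.Limits MonoidalCategory

universe v u w

/-!
Bending the left leg of `a : 𝟙_ C ⟶ X ⊗ Y` down with `evl X` and its right leg down with `evr Y`
gives maps `X* ⟶ Y` and `Y* ⟶ X`, and the two sides of the formula are these maps attached to
`coevr X` and to `coevl Y`. Sliding a map around a coevaluation replaces it by its mate for the
exact pairings `(X*, X)` and `(Y, Y*)`, so the formula says that the two maps are mates of each
other. Tested against evaluations, this says that pairing `a` with the nested left evaluation
`(Y* ⊗ X*) ⊗ (X ⊗ Y) ⟶ 𝟙` agrees with pairing it with the nested right one. Both nested evaluations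
factor through `mcon : Y* ⊗ X* ⟶ (X ⊗ Y)*`, which leaves `evl (X ⊗ Y)` against `evr (X ⊗ Y)`; both
factor further through `pdual a : (X ⊗ Y)* ⟶ 𝟙*`, where the two evaluations of `𝟙` agree.
-/

namespace PivotalCat

section ExactPairing

variable {C : Type u} [Category.{v} C] [MonoidalCategory C]

theorem whiskerRight_comp_evaluation_eq_iff {W X X' : C} [ExactPairing X X'] (f : W ⟶ X')
    (g : W ⊗ X ⟶ 𝟙_ C) :
    f ▷ X ≫ ε_ X X' = g ↔
      f = (ρ_ W).inv ≫ W ◁ η_ X X' ≫ (α_ W X X').inv ≫ g ▷ X' ≫ (λ_ X').hom := by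
  let : HasRightDual X := ⟨X'⟩
  have transpose_comp_evaluation :
      tensorRightHomEquiv W X X' (𝟙_ C) (f ▷ X ≫ ε_ X X') = f ≫ (λ_ X').inv :=
    tensorRightHomEquiv_whiskerRight_comp_evaluation (X := X) f
  rw [← (tensorRightHomEquiv W X X' (𝟙_ C)).apply_eq_iff_eq, transpose_comp_evaluation,
    Iso.comp_inv_eq]
  simp [tensorRightHomEquiv]

theorem whiskerLeft_comp_evaluation_eq_iff {W X X' : C} [ExactPairing X X'] (f : W ⟶ X)
    (g : X' ⊗ W ⟶ 𝟙_ C) :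
    X' ◁ f ≫ ε_ X X' = g ↔
      f = (λ_ W).inv ≫ η_ X X' ▷ W ≫ (α_ X X' W).hom ≫ X ◁ g ≫ (ρ_ X).hom := by
  let : HasLeftDual X' := ⟨X⟩
  have transpose_comp_evaluation :
      tensorLeftHomEquiv W X X' (𝟙_ C) (X' ◁ f ≫ ε_ X X') = f ≫ (ρ_ X).inv :=
    tensorLeftHomEquiv_whiskerLeft_comp_evaluation (Z := X') f
  rw [← (tensorLeftHomEquiv W X X' (𝟙_ C)).apply_eq_iff_eq, transpose_comp_evaluation,
    Iso.comp_inv_eq]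
  simp [tensorLeftHomEquiv]

theorem coevaluation_comp_eq_of_comp_evaluation_eq {X X' Y Y' : C} [ExactPairing X X']
    [ExactPairing Y Y'] {f : X ⟶ Y} {g : Y' ⟶ X'}
    (h : Y' ◁ f ≫ ε_ Y Y' = g ▷ X ≫ ε_ X X') :
    η_ X X' ≫ f ▷ X' = η_ Y Y' ≫ Y ◁ g := by
  let : HasRightDual X := ⟨X'⟩
  let : HasRightDual Y := ⟨Y'⟩
  have g_eq_mate : g = fᘁ :=
    ((whiskerRight_comp_evaluation_eq_iff g _).1 rfl).trans
      ((whiskerRight_comp_evaluation_eq_iff (fᘁ) _).1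
        ((rightAdjointMate_comp_evaluation f).trans h)).symm
  rw [g_eq_mate]
  exact (coevaluation_comp_rightAdjointMate f).symm

end ExactPairing

variable {C : Type u} [Category.{v} C] [MonoidalCategory C] [PivotalCat C]

/-- The left duality `(evl, coevl)` as an exact pairing; Mathlib lists first the object that comes
first in the target of the coevaluation. -/
instance leftDuality (X : C) : ExactPairing X (dual X) where
  coevaluation' := coevl X
  evaluation' := evl X
  coevaluation_evaluation' := by
    simpa [Iso.inv_comp_eq, Iso.eq_comp_inv] using left_zigzag₂ X
  evaluation_coevaluation' := by
    simpa [Iso.inv_comp_eq, Iso.eq_comp_inv] using left_zigzag₁ X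

/-- The right duality `(evr, coevr)` as an exact pairing, with `dual X` first. -/
instance rightDuality (X : C) : ExactPairing (dual X) X where
  coevaluation' := coevr X
  evaluation' := evr X
  coevaluation_evaluation' := by
    simpa [Iso.inv_comp_eq, Iso.eq_comp_inv] using right_zigzag₁ X
  evaluation_coevaluation' := by
    simpa [Iso.inv_comp_eq, Iso.eq_comp_inv] using right_zigzag₂ X

theorem pdual_whiskerRight_comp_evl {X Y : C} (f : X ⟶ Y) :
    pdual f ▷ X ≫ evl X = dual Y ◁ f ≫ evl Y := by
  refine (whiskerRight_comp_evaluation_eq_iff (X := X) _ _).2 ?_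
  change _ = (ρ_ _).inv ≫ dual Y ◁ coevl X ≫ _
  simp [pdual]

theorem whiskerLeft_pdual_comp_evr {X Y : C} (f : X ⟶ Y) :
    X ◁ pdual f ≫ evr X = f ▷ dual Y ≫ evr Y := by
  refine (whiskerLeft_comp_evaluation_eq_iff (X' := X) _ _).2 ?_
  change _ = (λ_ _).inv ≫ coevr X ▷ dual Y ≫ _
  rw [pdual, ldual_eq_rdual]
  simp

theorem mcon_whiskerRight_comp_evl (X Y : C) :
    mcon X Y ▷ (Y ⊗ X) ≫ evl (Y ⊗ X) = ε_ (Y ⊗ X) (dual X ⊗ dual Y) := by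
  refine (whiskerRight_comp_evaluation_eq_iff (X := Y ⊗ X) _ _).2 ?_
  change _ = (ρ_ _).inv ≫ _ ◁ coevl (Y ⊗ X) ≫ (α_ _ _ _).inv ≫
    (𝟙 _ ⊗≫ dual X ◁ (evl Y ▷ X) ⊗≫ evl X) ▷ _ ≫ _
  rw [mcon]
  monoidal

theorem whiskerLeft_mcon_comp_evr (X Y : C) :
    (Y ⊗ X) ◁ mcon X Y ≫ evr (Y ⊗ X) = ε_ (dual X ⊗ dual Y) (Y ⊗ X) := by
  refine (whiskerLeft_comp_evaluation_eq_iff (X' := Y ⊗ X) _ _).2 ?_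
  change _ = (λ_ _).inv ≫ coevr (Y ⊗ X) ▷ _ ≫ (α_ _ _ _).hom ≫
    _ ◁ (𝟙 _ ⊗≫ Y ◁ (evr X ▷ dual Y) ⊗≫ evr Y) ≫ _
  rw [mcon, constraint_eq]
  monoidal

theorem comp_evl_eq_comp_evr {Z : C} (a : 𝟙_ C ⟶ Z) :
    (ρ_ (dual Z)).inv ≫ dual Z ◁ a ≫ evl Z = (λ_ (dual Z)).inv ≫ a ▷ dual Z ≫ evr Z := by
  rw [← pdual_whiskerRight_comp_evl, ← whiskerLeft_pdual_comp_evr,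
    ← rightUnitor_inv_naturality_assoc, ev_unit, leftUnitor_inv_naturality_assoc]

theorem comp_whiskerRight_evl_eq_comp_whiskerLeft_evr {W Z : C} (a : 𝟙_ C ⟶ Z)
    (f : W ⟶ dual Z) :
    (ρ_ W).inv ≫ W ◁ a ≫ f ▷ Z ≫ evl Z = (λ_ W).inv ≫ a ▷ W ≫ Z ◁ f ≫ evr Z := by
  rw [whisker_exchange_assoc, ← whisker_exchange_assoc a f, ← rightUnitor_inv_naturality_assoc,
    comp_evl_eq_comp_evr, leftUnitor_inv_naturality_assoc]

/-- The map `X* ⟶ Y` obtained from `a : 𝟙_ C ⟶ X ⊗ Y` by contracting `X` with `evl X`. -/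
def leftContraction {X Y : C} (a : 𝟙_ C ⟶ X ⊗ Y) : dual X ⟶ Y :=
  (ρ_ (dual X)).inv ≫ dual X ◁ a ≫ (α_ (dual X) X Y).inv ≫ evl X ▷ Y ≫ (λ_ Y).hom

/-- The map `Y* ⟶ X` obtained from `a : 𝟙_ C ⟶ X ⊗ Y` by contracting `Y` with `evr Y`. -/
def rightContraction {X Y : C} (a : 𝟙_ C ⟶ X ⊗ Y) : dual Y ⟶ X :=
  (λ_ (dual Y)).inv ≫ a ▷ dual Y ≫ (α_ X Y (dual Y)).hom ≫ X ◁ evr Y ≫ (ρ_ X).hom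

theorem whiskerLeft_leftContraction_comp_evl {X Y : C} (a : 𝟙_ C ⟶ X ⊗ Y) :
    dual Y ◁ leftContraction a ≫ evl Y =
      (ρ_ (dual Y ⊗ dual X)).inv ≫ (dual Y ⊗ dual X) ◁ a ≫ ε_ (X ⊗ Y) (dual Y ⊗ dual X) := by
  change _ = _ ≫ _ ≫ (𝟙 _ ⊗≫ dual Y ◁ (evl X ▷ Y) ⊗≫ evl Y)
  rw [leftContraction]
  monoidal

theorem rightContraction_whiskerRight_comp_evr {X Y : C} (a : 𝟙_ C ⟶ X ⊗ Y) :
    rightContraction a ▷ dual X ≫ evr X =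
      (λ_ (dual Y ⊗ dual X)).inv ≫ a ▷ (dual Y ⊗ dual X) ≫ ε_ (dual Y ⊗ dual X) (X ⊗ Y) := by
  change _ = _ ≫ _ ≫ (𝟙 _ ⊗≫ X ◁ (evr Y ▷ dual X) ⊗≫ evr X)
  rw [rightContraction]
  monoidal

theorem leftContraction_comp_evl_eq_rightContraction_comp_evr {X Y : C} (a : 𝟙_ C ⟶ X ⊗ Y) :
    dual Y ◁ leftContraction a ≫ evl Y = rightContraction a ▷ dual X ≫ evr X := by
  rw [whiskerLeft_leftContraction_comp_evl, rightContraction_whiskerRight_comp_evr,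
    ← mcon_whiskerRight_comp_evl, ← whiskerLeft_mcon_comp_evr,
    comp_whiskerRight_evl_eq_comp_whiskerLeft_evr]

theorem sigmaMap_eq_coevr_comp_leftContraction {X Y : C} (a : 𝟙_ C ⟶ X ⊗ Y) :
    sigmaMap X Y a = coevr X ≫ leftContraction a ▷ X := by
  rw [sigmaMap, leftContraction]
  monoidal

theorem coevr_comp_leftContraction_eq_coevl_comp_rightContraction {X Y : C} (a : 𝟙_ C ⟶ X ⊗ Y) :
    coevr X ≫ leftContraction a ▷ X = coevl Y ≫ Y ◁ rightContraction a :=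
  coevaluation_comp_eq_of_comp_evaluation_eq
    (leftContraction_comp_evl_eq_rightContraction_comp_evr a)

end PivotalCat

open PivotalCat in
/-- Formula (2.2): the permutation map `σ_{X,Y}` can also be computed as
`σ_{X,Y}(α) = (id_{Y⊗X} ⊗ ev_r Y) ∘ (id_Y ⊗ α ⊗ id_{Y*}) ∘ coev_l Y`. -/
theorem sigmaMap_eq_right_formula {C : Type u} [Category.{v} C] [MonoidalCategory C]
    [PivotalCat C] (X Y : C) (a : 𝟙_ C ⟶ X ⊗ Y) :
    sigmaMap X Y a =
      coevl Y ≫ (Y ◁ (λ_ (dual Y)).inv) ≫ (Y ◁ (a ▷ dual Y)) ≫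
        (Y ◁ (α_ X Y (dual Y)).hom) ≫ (α_ Y X (Y ⊗ dual Y)).inv ≫
        ((Y ⊗ X) ◁ evr Y) ≫ (ρ_ (Y ⊗ X)).hom := by
  rw [sigmaMap_eq_coevr_comp_leftContraction,
    coevr_comp_leftContraction_eq_coevl_comp_rightContraction, rightContraction]
  monoidal
end
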